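/- Assume u ∈ H²(Ω) and let C₁ > 0. There exists a constant C > 0 depending only on Ω, a, b, c and C₁ such that for every mesh with max_i h_i ≤ C₁/N whose finite element solution defines α_h, the following holds: if r' ∈ L¹(Ω), then ‖r‖_{L^{2/3}(Ω)}^{2/3} − (C ‖r‖_Ω / N)^{2/3} ≤ α_h^{1/3} ≤ ‖r‖_{L^{2/3}(Ω)}^{2/3} + (C ‖r'‖_{L¹(Ω)} / N)^{2/3} + (C ‖r‖_Ω / N)^{2/3}, where r = f + a' u' − b u' − c u. -/

import Mathlib

/-!
Setting of Huang–He, "Error analysis for equidistributing meshes":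
the boundary value problem  −(a u')' + b u' + c u = f on Ω = (0,1), u(0)=u(1)=0,
its linear finite element discretization on a mesh 0 = x₀ < ⋯ < x_N = 1,
and the residual-based equidistribution quantities.
-/

noncomputable section
open MeasureTheory Real

namespace EquidMesh

/-- L² norm on (0,1). -/
def L2 (g : ℝ → ℝ) : ℝ := Real.sqrt (∫ t in (0:ℝ)..1, (g t)^2)

/-- L¹ norm on (0,1). -/
def L1 (g : ℝ → ℝ) : ℝ := ∫ t in (0:ℝ)..1, |g t|

/-- The L^{2/3} quasi-norm on (0,1): (∫₀¹ |g|^{2/3})^{3/2}. -/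
def Lp23 (g : ℝ → ℝ) : ℝ := (∫ t in (0:ℝ)..1, |g t| ^ ((2:ℝ)/3)) ^ ((3:ℝ)/2)

/-- L^∞ norm (essential supremum of |g|) on (0,1). -/
def Linf (g : ℝ → ℝ) : ℝ := essSup (fun t => |g t|) (volume.restrict (Set.Ioo (0:ℝ) 1))

/-- Membership in L²(0,1). -/
def MemL2 (g : ℝ → ℝ) : Prop :=
  Measurable g ∧ IntervalIntegrable (fun t => (g t)^2) volume 0 1

/-- Membership in L^∞(0,1). -/
def MemLinf (g : ℝ → ℝ) : Prop :=
  Measurable g ∧ ∃ M : ℝ, ∀ᵐ x ∂(volume.restrict (Set.Ioo (0:ℝ) 1)), |g x| ≤ M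

/-- `g` is absolutely continuous on [0,1] with derivative `g' ∈ L¹(0,1)`. -/
def HasL1Deriv (g g' : ℝ → ℝ) : Prop :=
  Measurable g' ∧ IntervalIntegrable g' volume 0 1 ∧
    ∀ x ∈ Set.Icc (0:ℝ) 1, g x = g 0 + ∫ t in (0:ℝ)..x, g' t

/-- A function in H¹(0,1): absolutely continuous on [0,1], carried together with its
(a.e.) derivative, which lies in L²(0,1). -/
structure H1 where
  val : ℝ → ℝ
  dval : ℝ → ℝ
  dval_meas : Measurable dval
  dval_int : IntervalIntegrable dval volume 0 1
  dval_sq_int : IntervalIntegrable (fun t => (dval t)^2) volume 0 1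
  ftc : ∀ x ∈ Set.Icc (0:ℝ) 1, val x = val 0 + ∫ t in (0:ℝ)..x, dval t

/-- `u ∈ H²(0,1)`: the derivative `u'` is absolutely continuous with `u'' ∈ L²(0,1)`. -/
def H1.IsH2 (u : H1) : Prop :=
  ∃ u'' : ℝ → ℝ, Measurable u'' ∧ IntervalIntegrable u'' volume 0 1 ∧
    IntervalIntegrable (fun t => (u'' t)^2) volume 0 1 ∧
    ∀ x ∈ Set.Icc (0:ℝ) 1, u.dval x = u.dval 0 + ∫ t in (0:ℝ)..x, u'' t

/-- The coefficients of the elliptic problem on Ω = (0,1):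
`a, b ∈ W^{1,∞}(Ω)`, `c ∈ L^∞(Ω)`, `a ≥ a₀ > 0`, and `c − b'/2 ≥ 0` a.e. -/
structure Coeffs where
  a : ℝ → ℝ
  b : ℝ → ℝ
  c : ℝ → ℝ
  a' : ℝ → ℝ
  b' : ℝ → ℝ
  a0 : ℝ
  a0_pos : 0 < a0
  a_lb : ∀ x ∈ Set.Icc (0:ℝ) 1, a0 ≤ a x
  a'_meas : Measurable a'
  b'_meas : Measurable b'
  c_meas : Measurable c
  a'_int : IntervalIntegrable a' volume 0 1
  b'_int : IntervalIntegrable b' volume 0 1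
  a'_bdd : ∃ M : ℝ, ∀ᵐ x ∂(volume.restrict (Set.Ioo (0:ℝ) 1)), |a' x| ≤ M
  b'_bdd : ∃ M : ℝ, ∀ᵐ x ∂(volume.restrict (Set.Ioo (0:ℝ) 1)), |b' x| ≤ M
  c_bdd : ∃ M : ℝ, ∀ᵐ x ∂(volume.restrict (Set.Ioo (0:ℝ) 1)), |c x| ≤ M
  ftc_a : ∀ x ∈ Set.Icc (0:ℝ) 1, a x = a 0 + ∫ t in (0:ℝ)..x, a' t
  ftc_b : ∀ x ∈ Set.Icc (0:ℝ) 1, b x = b 0 + ∫ t in (0:ℝ)..x, b' t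
  cb_nonneg : ∀ᵐ x ∂(volume.restrict (Set.Ioo (0:ℝ) 1)), 0 ≤ c x - b' x / 2

/-- The bilinear form B(u,v) = ∫₀¹ (a u' v' + b u' v + c u v) dx. -/
def Coeffs.B (P : Coeffs) (u v : H1) : ℝ :=
  ∫ t in (0:ℝ)..1,
    (P.a t * u.dval t * v.dval t + P.b t * u.dval t * v.val t + P.c t * u.val t * v.val t)

/-- The right-hand side functional (f, v) = ∫₀¹ f v dx. -/
def ip (f : ℝ → ℝ) (v : H1) : ℝ := ∫ t in (0:ℝ)..1, f t * v.val t

/-- `u ∈ H¹₀(Ω)` is the weak solution: B(u,v) = (f,v) for all v ∈ H¹₀(Ω). -/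
def Coeffs.IsWeakSolution (P : Coeffs) (f : ℝ → ℝ) (u : H1) : Prop :=
  u.val 0 = 0 ∧ u.val 1 = 0 ∧
    ∀ v : H1, v.val 0 = 0 → v.val 1 = 0 → P.B u v = ip f v

/-- A mesh of N elements of Ω = (0,1): 0 = x₀ < x₁ < ⋯ < x_N = 1. -/
structure Mesh (N : ℕ) where
  x : ℕ → ℝ
  x_zero : x 0 = 0
  x_last : x N = 1
  x_mono : ∀ i < N, x i < x (i+1)

/-- Element length (the element of index `i` is `(x i, x (i+1))`, `0 ≤ i < N`). -/
def Mesh.h {N : ℕ} (m : Mesh N) (i : ℕ) : ℝ := m.x (i+1) - m.x i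

/-- `v` is piecewise linear with respect to the mesh: its derivative is constant
inside each element. -/
def Mesh.IsPL {N : ℕ} (m : Mesh N) (v : H1) : Prop :=
  ∀ i < N, ∃ s : ℝ, ∀ t ∈ Set.Ioo (m.x i) (m.x (i+1)), v.dval t = s

/-- `uh` is the linear finite element solution on the mesh `m`:
a continuous piecewise linear function vanishing at 0 and 1 with
B(u_h, v_h) = (f, v_h) for all piecewise linear v_h vanishing at 0 and 1. -/
def Coeffs.IsFESolution (P : Coeffs) (f : ℝ → ℝ) {N : ℕ} (m : Mesh N) (uh : H1) : Prop :=
  uh.val 0 = 0 ∧ uh.val 1 = 0 ∧ m.IsPL uh ∧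
    ∀ v : H1, v.val 0 = 0 → v.val 1 = 0 → m.IsPL v → P.B uh v = ip f v

/-- The residual of `w`: r = f + a' w' − b w' − c w. -/
def Coeffs.res (P : Coeffs) (f : ℝ → ℝ) (w : H1) : ℝ → ℝ :=
  fun t => f t + P.a' t * w.dval t - P.b t * w.dval t - P.c t * w.val t

/-- The element L² average ⟨g⟩_i = (h_i⁻¹ ∫_{K_i} g²)^{1/2}. -/
def Mesh.avg {N : ℕ} (m : Mesh N) (g : ℝ → ℝ) (i : ℕ) : ℝ :=
  Real.sqrt ((1 / m.h i) * ∫ t in (m.x i)..(m.x (i+1)), (g t)^2)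

/-- The intensity parameter α_h = (Σ_i h_i ⟨g⟩_i^{2/3})³. -/
def Mesh.alpha {N : ℕ} (m : Mesh N) (g : ℝ → ℝ) : ℝ :=
  (∑ i ∈ Finset.range N, m.h i * (m.avg g i) ^ ((2:ℝ)/3)) ^ 3

/-- The adaptation function value ρ_i = (1 + α_h⁻¹ ⟨g⟩_i²)^{1/3}. -/
def Mesh.rho {N : ℕ} (m : Mesh N) (g : ℝ → ℝ) (i : ℕ) : ℝ :=
  (1 + (m.alpha g)⁻¹ * (m.avg g i)^2) ^ ((1:ℝ)/3)

/-- σ_h = Σ_i ρ_i h_i. -/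
def Mesh.sigma {N : ℕ} (m : Mesh N) (g : ℝ → ℝ) : ℝ :=
  ∑ i ∈ Finset.range N, m.rho g i * m.h i

/-- The mesh equidistributes (the piecewise constant adaptation function built from) `g`:
ρ_i h_i = σ_h / N for all elements. -/
def Mesh.IsEquidistributing {N : ℕ} (m : Mesh N) (g : ℝ → ℝ) : Prop :=
  ∀ i < N, m.rho g i * m.h i = m.sigma g / (N:ℝ)

/-- Membership in the mesh set S_N: 1/(ρ₀ N) ≤ h_i ≤ 2/N for all i. -/
def Mesh.InS {N : ℕ} (m : Mesh N) (ρ0 : ℝ) : Prop :=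
  ∀ i < N, 1 / (ρ0 * (N:ℝ)) ≤ m.h i ∧ m.h i ≤ 2 / (N:ℝ)

/-- The maximum norm distance ‖X − X̃‖_∞ between two meshes with the same N. -/
def meshDist {N : ℕ} (m m' : Mesh N) : ℝ :=
  (Finset.range (N+1)).sup' (Finset.nonempty_range_iff.mpr (Nat.succ_ne_zero N))
    (fun i => |m.x i - m'.x i|)

/-- The energy norm squared ‖v‖_E² = ∫₀¹ (a v'² + (c − b'/2) v²) dx. -/
def Coeffs.energySq (P : Coeffs) (v : H1) : ℝ :=
  ∫ t in (0:ℝ)..1, (P.a t * (v.dval t)^2 + (P.c t - P.b' t / 2) * (v.val t)^2)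

/-- `F` is a primitive of the integrable function `F'` on `[0,1]`. -/
def HasPrim (F F' : ℝ → ℝ) : Prop :=
  IntervalIntegrable F' volume 0 1 ∧
    ∀ x ∈ Set.Icc (0:ℝ) 1, F x = F 0 + ∫ t in (0:ℝ)..x, F' t

lemma intervalIntegrable_subinterval {f : ℝ → ℝ} (hf : IntervalIntegrable f volume 0 1) {x y : ℝ}
    (hx : x ∈ Set.Icc (0:ℝ) 1) (hy : y ∈ Set.Icc (0:ℝ) 1) : IntervalIntegrable f volume x y :=
  hf.mono_set (Set.uIcc_subset_uIcc (by simpa using hx) (by simpa using hy))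

lemma HasPrim.sub_eq {F F' : ℝ → ℝ} (h : HasPrim F F') {x y : ℝ} (hx : x ∈ Set.Icc (0:ℝ) 1)
    (hy : y ∈ Set.Icc (0:ℝ) 1) : F y - F x = ∫ t in x..y, F' t := by
  have h0 : (0:ℝ) ∈ Set.Icc (0:ℝ) 1 := by simp
  rw [h.2 x hx, h.2 y hy, ← intervalIntegral.integral_interval_sub_left
    (intervalIntegrable_subinterval h.1 h0 hy) (intervalIntegrable_subinterval h.1 h0 hx)]
  ring

lemma HasPrim.continuousOn {F F' : ℝ → ℝ} (h : HasPrim F F') :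
    ContinuousOn F (Set.Icc (0:ℝ) 1) := by
  have h1 := (h.1.absolutelyContinuousOnInterval_intervalIntegral (c := 0) (by simp)).continuousOn
  rw [Set.uIcc_of_le zero_le_one] at h1
  exact (continuousOn_const.add h1).congr fun x hx => h.2 x hx

lemma HasPrim.mul {F F' G G' : ℝ → ℝ} (hF : HasPrim F F') (hG : HasPrim G G') :
    HasPrim (fun x => F x * G x) (fun x => F' x * G x + F x * G' x) := by
  have h01 : Set.uIcc (0:ℝ) 1 = Set.Icc 0 1 := Set.uIcc_of_le zero_le_one
  have hint : IntervalIntegrable (fun x => F' x * G x + F x * G' x) volume 0 1 :=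
    (hF.1.mul_continuousOn (h01 ▸ hG.continuousOn)).add
      (hG.1.continuousOn_mul (h01 ▸ hF.continuousOn))
  refine ⟨hint, fun x hx => ?_⟩
  have key : ∀ {H H' : ℝ → ℝ}, HasPrim H H' → ∃ K : ℝ → ℝ,
      AbsolutelyContinuousOnInterval K 0 x ∧ (∀ y ∈ Set.Icc (0:ℝ) 1, K y = H y) ∧
      (∀ᵐ y, y ∈ Set.uIcc (0:ℝ) 1 → HasDerivAt K (H' y) y) := by
    intro H H' h
    refine ⟨fun y => H 0 + ∫ t in (0:ℝ)..y, H' t, ?_, fun y hy => (h.2 y hy).symm, ?_⟩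
    · have hc : AbsolutelyContinuousOnInterval (fun _ : ℝ => H 0) 0 x :=
        contDiffOn_const.absolutelyContinuousOnInterval
      exact hc.add ((h.1.absolutelyContinuousOnInterval_intervalIntegral (c := 0) (by simp)).mono
        (Set.uIcc_subset_uIcc (by simp) (by simpa using hx)))
    · filter_upwards [h.1.ae_hasDerivAt_integral] with y hy hy1
      exact (hy hy1 0 (by simp)).const_add _
  obtain ⟨A, hA, hA1, hA2⟩ := key hF
  obtain ⟨B, hB, hB1, hB2⟩ := key hG
  have h3 := (hA.fun_mul hB).integral_deriv_eq_sub
  have h4 : ∫ t in (0:ℝ)..x, deriv (fun y => A y * B y) t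
      = ∫ t in (0:ℝ)..x, (F' t * G t + F t * G' t) := by
    apply intervalIntegral.integral_congr_ae
    filter_upwards [hA2, hB2] with y ha hb hy
    rw [Set.uIoc_of_le hx.1] at hy
    have hy1 : y ∈ Set.Icc (0:ℝ) 1 := ⟨hy.1.le, hy.2.trans hx.2⟩
    have := (ha (h01 ▸ hy1)).mul (hb (h01 ▸ hy1))
    rw [← hA1 y hy1, ← hB1 y hy1]
    exact this.deriv
  rw [h4, hA1 x hx, hB1 x hx, hA1 0 (by simp), hB1 0 (by simp)] at h3
  linarith

/-- An `L¹` function all of whose integrals `∫₀ˣ` vanish is zero almost everywhere. -/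
lemma ae_eq_zero_of_integral_eq_zero {φ : ℝ → ℝ} (hφ : IntervalIntegrable φ volume 0 1)
    (h : ∀ x ∈ Set.Icc (0:ℝ) 1, ∫ t in (0:ℝ)..x, φ t = 0) :
    ∀ᵐ x ∂(volume.restrict (Set.Ioc (0:ℝ) 1)), φ x = 0 := by
  rw [ae_restrict_iff' measurableSet_Ioc]
  have h1 : ∀ᵐ x : ℝ, x ≠ 1 := by simp [ae_iff, measure_singleton]
  filter_upwards [hφ.ae_hasDerivAt_integral, h1] with x hx hx1 hxI
  have hd := hx (by rw [Set.uIcc_of_le zero_le_one]; exact ⟨hxI.1.le, hxI.2⟩) 0 (by simp)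
  have h0 : HasDerivAt (fun x => ∫ t in (0:ℝ)..x, φ t) 0 x := by
    refine (hasDerivAt_const x (0:ℝ)).congr_of_eventuallyEq ?_
    filter_upwards [Ioo_mem_nhds hxI.1 (lt_of_le_of_ne hxI.2 hx1)] with y hy
    exact h y ⟨hy.1.le, hy.2.le⟩
  exact hd.unique h0

lemma integral_mul_sq_le {α : Type*} [MeasurableSpace α] {ν : Measure α} {f g : α → ℝ}
    (hf : MemLp f 2 ν) (hg : MemLp g 2 ν) :
    ∫ x, |f x| * |g x| ∂ν ≤ √(∫ x, (f x)^2 ∂ν) * √(∫ x, (g x)^2 ∂ν) := by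
  have h := integral_mul_norm_le_Lp_mul_Lq (μ := ν) (f := f) (g := g) Real.HolderConjugate.two_two
    (by simpa using hf) (by simpa using hg)
  simpa [Real.sqrt_eq_rpow] using h

lemma integral_abs_mul_le {α : Type*} [MeasurableSpace α] {ν : Measure α} {f g : α → ℝ}
    (hf : MemLp f 2 ν) (hg : MemLp g 2 ν) :
    |∫ x, f x * g x ∂ν| ≤ √(∫ x, (f x)^2 ∂ν) * √(∫ x, (g x)^2 ∂ν) := by
  refine (abs_integral_le_integral_abs).trans ?_
  simp_rw [abs_mul]
  exact integral_mul_sq_le hf hg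

lemma sqrt_integral_add_sq_le {α : Type*} [MeasurableSpace α] {ν : Measure α} {f g : α → ℝ}
    (hf : MemLp f 2 ν) (hg : MemLp g 2 ν) :
    √(∫ x, (f x + g x)^2 ∂ν) ≤ √(∫ x, (f x)^2 ∂ν) + √(∫ x, (g x)^2 ∂ν) := by
  rw [Real.sqrt_le_left (by positivity)]
  have h1 : ∫ x, (f x + g x)^2 ∂ν
      = (∫ x, (f x)^2 ∂ν) + 2 * (∫ x, f x * g x ∂ν) + ∫ x, (g x)^2 ∂ν := by
    have hfg : Integrable (fun x => f x * g x) ν := hf.integrable_mul hg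
    rw [← integral_const_mul, ← integral_add hf.integrable_sq (hfg.const_mul 2),
      ← integral_add (f := fun x => (f x)^2 + 2 * (f x * g x))
        (hf.integrable_sq.add (hfg.const_mul 2)) hg.integrable_sq]
    congr 1; ext x; ring
  have h2 := (abs_le.1 (integral_abs_mul_le hf hg)).2
  rw [h1, add_sq, Real.sq_sqrt (integral_nonneg fun x => sq_nonneg _),
    Real.sq_sqrt (integral_nonneg fun x => sq_nonneg _)]
  linarith

/-- Lebesgue measure on `(0,1]`. -/
abbrev unitMeas : Measure ℝ := volume.restrict (Set.Ioc (0:ℝ) 1)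

lemma L2_eq (g : ℝ → ℝ) : L2 g = √(∫ x, (g x)^2 ∂unitMeas) := by
  rw [L2, intervalIntegral.integral_of_le zero_le_one]

lemma L2_nonneg (g : ℝ → ℝ) : 0 ≤ L2 g := Real.sqrt_nonneg _

lemma L2_sq (g : ℝ → ℝ) : L2 g ^ 2 = ∫ x, (g x)^2 ∂unitMeas := by
  rw [L2_eq, Real.sq_sqrt (integral_nonneg fun x => sq_nonneg _)]

lemma memLp_two_of_continuousOn {g : ℝ → ℝ} (hg : ContinuousOn g (Set.Icc (0:ℝ) 1)) :
    MemLp g 2 unitMeas := by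
  obtain ⟨M, hM⟩ := isCompact_Icc.exists_bound_of_continuousOn hg
  refine MemLp.of_bound
    ((hg.mono Set.Ioc_subset_Icc_self).aestronglyMeasurable measurableSet_Ioc) M ?_
  filter_upwards [ae_restrict_mem measurableSet_Ioc] with x hx
  exact hM x (Set.Ioc_subset_Icc_self hx)

lemma memLp_two_of_intervalIntegrable {g : ℝ → ℝ} (hg : Measurable g)
    (h : IntervalIntegrable (fun t => (g t)^2) volume 0 1) : MemLp g 2 unitMeas := by
  rw [memLp_two_iff_integrable_sq hg.aestronglyMeasurable]
  exact (intervalIntegrable_iff_integrableOn_Ioc_of_le zero_le_one).1 h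

/-- A bounded coefficient times an `L²` function is in `L²`. -/
lemma memLp_two_bdd_mul {k g : ℝ → ℝ} {K : ℝ} (hk : AEStronglyMeasurable k unitMeas)
    (hK : ∀ᵐ x ∂unitMeas, |k x| ≤ K) (hg : MemLp g 2 unitMeas) :
    MemLp (fun x => k x * g x) 2 unitMeas := by
  refine MemLp.of_le_mul (c := K) hg (hk.mul hg.1) ?_
  filter_upwards [hK] with x hx
  rw [norm_mul]
  exact mul_le_mul_of_nonneg_right hx (norm_nonneg _)

lemma intervalIntegrable_of_memLp {g : ℝ → ℝ} (hg : MemLp g 2 unitMeas) :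
    IntervalIntegrable g volume 0 1 :=
  (intervalIntegrable_iff_integrableOn_Ioc_of_le zero_le_one).2 (hg.integrable one_le_two)

lemma integral_abs_le_L2 {g : ℝ → ℝ} (hg : MemLp g 2 unitMeas) :
    ∫ x, |g x| ∂unitMeas ≤ L2 g := by
  have h := integral_mul_sq_le hg (memLp_const (1:ℝ))
  simpa [← L2_eq] using h

lemma H1.hasPrim (v : H1) : HasPrim v.val v.dval := ⟨v.dval_int, v.ftc⟩

lemma H1.memLp_dval (v : H1) : MemLp v.dval 2 unitMeas :=
  memLp_two_of_intervalIntegrable v.dval_meas v.dval_sq_int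

lemma H1.memLp_val (v : H1) : MemLp v.val 2 unitMeas :=
  memLp_two_of_continuousOn v.hasPrim.continuousOn

/-- The difference of two `H¹` functions. -/
def H1.sub (u v : H1) : H1 where
  val x := u.val x - v.val x
  dval x := u.dval x - v.dval x
  dval_meas := u.dval_meas.sub v.dval_meas
  dval_int := u.dval_int.sub v.dval_int
  dval_sq_int := (intervalIntegrable_iff_integrableOn_Ioc_of_le zero_le_one).2
    (u.memLp_dval.sub v.memLp_dval).integrable_sq
  ftc x hx := by
    have h0 : (0:ℝ) ∈ Set.Icc (0:ℝ) 1 := by simp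
    rw [intervalIntegral.integral_sub (intervalIntegrable_subinterval u.dval_int h0 hx)
      (intervalIntegrable_subinterval v.dval_int h0 hx), u.ftc x hx, v.ftc x hx]
    ring

/-- An `H¹` function vanishing at `0` is bounded by the `L²` norm of its derivative. -/
lemma H1.abs_val_le (v : H1) (h0 : v.val 0 = 0) {x : ℝ} (hx : x ∈ Set.Icc (0:ℝ) 1) :
    |v.val x| ≤ L2 v.dval := by
  rw [v.ftc x hx, h0, zero_add, intervalIntegral.integral_of_le hx.1]
  refine abs_integral_le_integral_abs.trans (le_trans ?_ (integral_abs_le_L2 v.memLp_dval))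
  exact setIntegral_mono_set (v.memLp_dval.integrable one_le_two).abs
    (Filter.Eventually.of_forall fun _ => abs_nonneg _)
    (Set.Ioc_subset_Ioc_right hx.2).eventuallyLE

lemma Coeffs.hasPrim_a (P : Coeffs) : HasPrim P.a P.a' := ⟨P.a'_int, P.ftc_a⟩

lemma Coeffs.hasPrim_b (P : Coeffs) : HasPrim P.b P.b' := ⟨P.b'_int, P.ftc_b⟩

lemma ae_unitMeas_of_Ioo {p : ℝ → Prop}
    (h : ∀ᵐ x ∂(volume.restrict (Set.Ioo (0:ℝ) 1)), p x) : ∀ᵐ x ∂unitMeas, p x := by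
  rwa [unitMeas, ← Measure.restrict_congr_set Ioo_ae_eq_Ioc]

/-- `K` bounds the coefficients `a`, `a'`, `b` and `c`. -/
def Coeffs.BoundedBy (P : Coeffs) (K : ℝ) : Prop :=
  ∀ᵐ x ∂unitMeas, |P.a x| ≤ K ∧ |P.a' x| ≤ K ∧ |P.b x| ≤ K ∧ |P.c x| ≤ K

lemma Coeffs.exists_bound (P : Coeffs) : ∃ K : ℝ, 0 < K ∧ P.BoundedBy K := by
  obtain ⟨A, hA⟩ := isCompact_Icc.exists_bound_of_continuousOn P.hasPrim_a.continuousOn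
  obtain ⟨B, hB⟩ := isCompact_Icc.exists_bound_of_continuousOn P.hasPrim_b.continuousOn
  obtain ⟨A', hA'⟩ := P.a'_bdd
  obtain ⟨C, hC⟩ := P.c_bdd
  refine ⟨|A| + |B| + |A'| + |C| + 1, by positivity, ?_⟩
  filter_upwards [ae_unitMeas_of_Ioo hA', ae_unitMeas_of_Ioo hC,
    ae_restrict_mem measurableSet_Ioc] with x h1 h2 h3
  have h4 := hA x (Set.Ioc_subset_Icc_self h3)
  have h5 := hB x (Set.Ioc_subset_Icc_self h3)
  rw [Real.norm_eq_abs] at h4 h5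
  have := le_abs_self A; have := le_abs_self B; have := le_abs_self A'; have := le_abs_self C
  have := abs_nonneg A; have := abs_nonneg B; have := abs_nonneg A'; have := abs_nonneg C
  refine ⟨?_, ?_, ?_, ?_⟩ <;> linarith

lemma aestronglyMeasurable_of_hasPrim {F F' : ℝ → ℝ} (h : HasPrim F F') :
    AEStronglyMeasurable F unitMeas :=
  (memLp_two_of_continuousOn h.continuousOn).1

section Bounds
variable {P : Coeffs} {K : ℝ}

lemma Coeffs.BoundedBy.memLp_a_mul (h : P.BoundedBy K) {g : ℝ → ℝ} (hg : MemLp g 2 unitMeas) :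
    MemLp (fun x => P.a x * g x) 2 unitMeas :=
  memLp_two_bdd_mul (aestronglyMeasurable_of_hasPrim P.hasPrim_a) (h.mono fun _ h => h.1) hg

lemma Coeffs.BoundedBy.memLp_a'_mul (h : P.BoundedBy K) {g : ℝ → ℝ} (hg : MemLp g 2 unitMeas) :
    MemLp (fun x => P.a' x * g x) 2 unitMeas :=
  memLp_two_bdd_mul P.a'_meas.aestronglyMeasurable (h.mono fun _ h => h.2.1) hg

lemma Coeffs.BoundedBy.memLp_b_mul (h : P.BoundedBy K) {g : ℝ → ℝ} (hg : MemLp g 2 unitMeas) :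
    MemLp (fun x => P.b x * g x) 2 unitMeas :=
  memLp_two_bdd_mul (aestronglyMeasurable_of_hasPrim P.hasPrim_b) (h.mono fun _ h => h.2.2.1) hg

lemma Coeffs.BoundedBy.memLp_c_mul (h : P.BoundedBy K) {g : ℝ → ℝ} (hg : MemLp g 2 unitMeas) :
    MemLp (fun x => P.c x * g x) 2 unitMeas :=
  memLp_two_bdd_mul P.c_meas.aestronglyMeasurable (h.mono fun _ h => h.2.2.2) hg

end Bounds

lemma Coeffs.integrable_B (P : Coeffs) (u v : H1) :
    Integrable (fun t => P.a t * u.dval t * v.dval t + P.b t * u.dval t * v.val t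
      + P.c t * u.val t * v.val t) unitMeas := by
  obtain ⟨K, -, h⟩ := P.exists_bound
  exact (((h.memLp_a_mul u.memLp_dval).integrable_mul v.memLp_dval).add
    ((h.memLp_b_mul u.memLp_dval).integrable_mul v.memLp_val)).add
    ((h.memLp_c_mul u.memLp_val).integrable_mul v.memLp_val)

lemma Coeffs.B_eq (P : Coeffs) (u v : H1) :
    P.B u v = ∫ t, (P.a t * u.dval t * v.dval t + P.b t * u.dval t * v.val t
      + P.c t * u.val t * v.val t) ∂unitMeas := by
  rw [Coeffs.B, intervalIntegral.integral_of_le zero_le_one]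

lemma Coeffs.B_sub_left (P : Coeffs) (u w v : H1) : P.B (u.sub w) v = P.B u v - P.B w v := by
  rw [B_eq, B_eq, B_eq, ← integral_sub (P.integrable_B u v) (P.integrable_B w v)]
  congr 1; ext t; simp only [H1.sub]; ring

lemma Coeffs.B_sub_right (P : Coeffs) (v u w : H1) : P.B v (u.sub w) = P.B v u - P.B v w := by
  rw [B_eq, B_eq, B_eq, ← integral_sub (P.integrable_B v u) (P.integrable_B v w)]
  congr 1; ext t; simp only [H1.sub]; ring

lemma Coeffs.abs_B_le {P : Coeffs} {K : ℝ} (hK : 0 < K) (h : P.BoundedBy K) (u v : H1)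
    (hu : u.val 0 = 0) (hv : v.val 0 = 0) : |P.B u v| ≤ 3 * K * L2 u.dval * L2 v.dval := by
  have hU := L2_nonneg u.dval
  have hV := L2_nonneg v.dval
  have i1 : Integrable (fun t => |u.dval t| * |v.dval t|) unitMeas :=
    u.memLp_dval.abs.integrable_mul v.memLp_dval.abs
  have i2 : Integrable (fun t => |u.dval t|) unitMeas := (u.memLp_dval.integrable one_le_two).abs
  rw [B_eq]
  refine abs_integral_le_integral_abs.trans ?_
  calc ∫ t, |P.a t * u.dval t * v.dval t + P.b t * u.dval t * v.val t
        + P.c t * u.val t * v.val t| ∂unitMeas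
      ≤ ∫ t, (K * (|u.dval t| * |v.dval t|) + K * L2 v.dval * |u.dval t|
        + K * L2 u.dval * L2 v.dval) ∂unitMeas := by
        refine integral_mono_ae (P.integrable_B u v).abs
          (((i1.const_mul _).add (i2.const_mul _)).add (integrable_const _)) ?_
        filter_upwards [h, ae_restrict_mem measurableSet_Ioc] with t ht htI
        obtain ⟨ha, -, hb, hc⟩ := ht
        have h1 := u.abs_val_le hu (Set.Ioc_subset_Icc_self htI)
        have h2 := v.abs_val_le hv (Set.Ioc_subset_Icc_self htI)
        refine (abs_add_three _ _ _).trans ?_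
        simp only [abs_mul]
        have e1 : |P.a t| * |u.dval t| * |v.dval t| ≤ K * (|u.dval t| * |v.dval t|) := by
          rw [mul_assoc]; gcongr
        have e2 : |P.b t| * |u.dval t| * |v.val t| ≤ K * L2 v.dval * |u.dval t| := by
          calc |P.b t| * |u.dval t| * |v.val t| ≤ K * |u.dval t| * L2 v.dval := by gcongr
            _ = _ := by ring
        have e3 : |P.c t| * |u.val t| * |v.val t| ≤ K * L2 u.dval * L2 v.dval := by gcongr
        linarith
    _ = K * (∫ t, |u.dval t| * |v.dval t| ∂unitMeas)
        + K * L2 v.dval * (∫ t, |u.dval t| ∂unitMeas) + K * L2 u.dval * L2 v.dval := by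
        rw [integral_add (f := fun t => K * (|u.dval t| * |v.dval t|) + K * L2 v.dval * |u.dval t|)
          ((i1.const_mul _).add (i2.const_mul _)) (integrable_const _),
          integral_add (i1.const_mul _) (i2.const_mul _), integral_const_mul, integral_const_mul]
        simp
    _ ≤ K * (L2 u.dval * L2 v.dval) + K * L2 v.dval * L2 u.dval + K * L2 u.dval * L2 v.dval := by
        gcongr
        · rw [L2_eq, L2_eq]; exact integral_mul_sq_le u.memLp_dval v.memLp_dval
        · exact integral_abs_le_L2 u.memLp_dval
    _ = _ := by ring

lemma Coeffs.coercive (P : Coeffs) (v : H1) (h0 : v.val 0 = 0) (h1 : v.val 1 = 0) :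
    P.a0 * L2 v.dval ^ 2 ≤ P.B v v := by
  have hp := P.hasPrim_b.mul (v.hasPrim.mul v.hasPrim)
  have hz := hp.2 1 (by simp)
  simp only [h0, h1, mul_zero, zero_add] at hz
  rw [intervalIntegral.integral_of_le zero_le_one] at hz
  have hi := (intervalIntegrable_iff_integrableOn_Ioc_of_le zero_le_one).1 hp.1
  rw [L2_sq, ← integral_const_mul]
  have hB : P.B v v = ∫ t, ((P.a t * v.dval t * v.dval t + P.b t * v.dval t * v.val t
      + P.c t * v.val t * v.val t) - 1 / 2 * (P.b' t * (v.val t * v.val t)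
        + P.b t * (v.dval t * v.val t + v.val t * v.dval t))) ∂unitMeas := by
    rw [integral_sub (P.integrable_B v v) (hi.const_mul _), integral_const_mul, ← hz, B_eq]
    ring
  rw [hB]
  refine integral_mono_ae (v.memLp_dval.integrable_sq.const_mul _)
    ((P.integrable_B v v).sub (hi.const_mul _)) ?_
  filter_upwards [ae_unitMeas_of_Ioo P.cb_nonneg, ae_restrict_mem measurableSet_Ioc] with t hc ht
  have ha := mul_le_mul_of_nonneg_right (P.a_lb t (Set.Ioc_subset_Icc_self ht))
    (sq_nonneg (v.dval t))
  have := mul_nonneg hc (sq_nonneg (v.val t))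
  linarith

lemma Coeffs.memLp_res (P : Coeffs) {f : ℝ → ℝ} (hf : MemL2 f) (w : H1) :
    MemLp (P.res f w) 2 unitMeas := by
  obtain ⟨K, -, h⟩ := P.exists_bound
  exact (((memLp_two_of_intervalIntegrable hf.1 hf.2).add (h.memLp_a'_mul w.memLp_dval)).sub
    (h.memLp_b_mul w.memLp_dval)).sub (h.memLp_c_mul w.memLp_val)

lemma L2_le_of_abs_le {g k : ℝ → ℝ} (hk : MemLp k 2 unitMeas) (hg : MemLp g 2 unitMeas)
    (h : ∀ᵐ x ∂unitMeas, |g x| ≤ |k x|) : L2 g ≤ L2 k := by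
  rw [L2_eq, L2_eq]
  refine Real.sqrt_le_sqrt (integral_mono_ae hg.integrable_sq hk.integrable_sq ?_)
  filter_upwards [h] with x hx
  exact sq_le_sq.2 hx

lemma L2_const_mul (K : ℝ) (hK : 0 ≤ K) (g : ℝ → ℝ) : L2 (fun x => K * g x) = K * L2 g := by
  simp only [L2_eq, mul_pow]
  rw [integral_const_mul, Real.sqrt_mul (sq_nonneg K), Real.sqrt_sq hK]

/-- The residual depends Lipschitz continuously on the function in the `H¹` seminorm. -/
lemma Coeffs.L2_res_sub_le {P : Coeffs} {K : ℝ} (hK : 0 < K) (h : P.BoundedBy K) {f : ℝ → ℝ}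
    (hf : MemL2 f) (u w : H1) (hu : u.val 0 = 0) (hw : w.val 0 = 0) :
    L2 (fun x => P.res f w x - P.res f u x) ≤ 3 * K * L2 (w.sub u).dval := by
  have hE := L2_nonneg (w.sub u).dval
  have m1 : MemLp (fun x => 2 * K * |(w.sub u).dval x|) 2 unitMeas :=
    (w.sub u).memLp_dval.abs.const_mul _
  have m2 : MemLp (fun _ : ℝ => K * L2 (w.sub u).dval) 2 unitMeas := memLp_const _
  calc L2 (fun x => P.res f w x - P.res f u x)
      ≤ L2 (fun x => 2 * K * |(w.sub u).dval x| + K * L2 (w.sub u).dval) := by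
        refine L2_le_of_abs_le (m1.add m2) ((P.memLp_res hf w).sub (P.memLp_res hf u)) ?_
        filter_upwards [h, ae_restrict_mem measurableSet_Ioc] with x hx hxI
        obtain ⟨-, ha, hb, hc⟩ := hx
        have h1 := (w.sub u).abs_val_le (by simp [H1.sub, hu, hw]) (Set.Ioc_subset_Icc_self hxI)
        have e0 : P.res f w x - P.res f u x = P.a' x * (w.sub u).dval x
            + (-P.b x) * (w.sub u).dval x + (-P.c x) * (w.sub u).val x := by
          simp only [Coeffs.res, H1.sub]; ring
        rw [e0, abs_of_nonneg (a := 2 * K * _ + _) (by positivity)]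
        refine (abs_add_three _ _ _).trans ?_
        simp only [abs_mul, abs_neg]
        have e1 : |P.a' x| * |(w.sub u).dval x| ≤ K * |(w.sub u).dval x| := by gcongr
        have e2 : |P.b x| * |(w.sub u).dval x| ≤ K * |(w.sub u).dval x| := by gcongr
        have e3 : |P.c x| * |(w.sub u).val x| ≤ K * L2 (w.sub u).dval := by gcongr
        linarith
    _ ≤ L2 (fun x => 2 * K * |(w.sub u).dval x|) + L2 (fun _ => K * L2 (w.sub u).dval) := by
        simp only [L2_eq _]
        exact sqrt_integral_add_sq_le m1 (by simpa only [L2_eq] using m2)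
    _ = _ := by
        rw [L2_const_mul (2 * K) (by positivity)]
        have e1 : L2 (fun x => |(w.sub u).dval x|) = L2 (w.sub u).dval := by
          simp [L2_eq]
        have e2 : L2 (fun _ => K * L2 (w.sub u).dval) = K * L2 (w.sub u).dval := by
          rw [L2]; simp only [intervalIntegral.integral_const, sub_zero, one_smul]
          exact Real.sqrt_sq (by positivity)
        rw [e1, e2]; ring

/-- The primitive, vanishing at `0`, of a measurable `L²` function. -/
def H1.primitive (g : ℝ → ℝ) (hg : Measurable g) (h : MemLp g 2 unitMeas) : H1 where
  val x := ∫ t in (0:ℝ)..x, g t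
  dval := g
  dval_meas := hg
  dval_int := intervalIntegrable_of_memLp h
  dval_sq_int := (intervalIntegrable_iff_integrableOn_Ioc_of_le zero_le_one).2 h.integrable_sq
  ftc x _ := by simp

/-- Strong form of the boundary value problem: `r = -a u''` almost everywhere. -/
lemma Coeffs.IsWeakSolution.res_eq {P : Coeffs} {f : ℝ → ℝ} (hf : MemL2 f) {u : H1}
    (hu : P.IsWeakSolution f u) {u'' : ℝ → ℝ} (hp : HasPrim u.dval u'') :
    ∀ᵐ x ∂unitMeas, P.res f u x + P.a x * u'' x = 0 := by
  have hau := P.hasPrim_a.mul hp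
  set φ : ℝ → ℝ := fun x => P.res f u x + P.a x * u'' x with hφdef
  have hφ : IntervalIntegrable φ volume 0 1 :=
    (intervalIntegrable_of_memLp (P.memLp_res hf u)).add
      (hp.1.continuousOn_mul (by rw [Set.uIcc_of_le zero_le_one]; exact P.hasPrim_a.continuousOn))
  have hΦ : HasPrim (fun x => ∫ t in (0:ℝ)..x, φ t) φ := ⟨hφ, fun x _ => by simp⟩
  set Φ : ℝ → ℝ := fun x => ∫ t in (0:ℝ)..x, φ t with hΦdef
  set κ : ℝ := ∫ t in (0:ℝ)..1, Φ t with hκ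
  have hΦi : IntervalIntegrable Φ volume 0 1 :=
    intervalIntegrable_of_memLp (memLp_two_of_continuousOn hΦ.continuousOn)
  set g : ℝ → ℝ := fun x => Φ (Set.projIcc (0:ℝ) 1 zero_le_one x) - κ with hg
  have hgc : Continuous g :=
    ((continuousOn_iff_continuous_domRestrict.1 hΦ.continuousOn).comp continuous_projIcc).sub
      continuous_const
  have hgI : ∀ x ∈ Set.Icc (0:ℝ) 1, g x = Φ x - κ := fun x hx => by
    simp only [hg, Set.projIcc_of_mem zero_le_one hx]
  let v : H1 := H1.primitive g hgc.measurable (memLp_two_of_continuousOn hgc.continuousOn)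
  have hv0 : v.val 0 = 0 := by simp [v, H1.primitive]
  have hv1 : v.val 1 = 0 := by
    change ∫ t in (0:ℝ)..1, g t = 0
    have : ∫ t in (0:ℝ)..1, g t = ∫ t in (0:ℝ)..1, (Φ t - κ) :=
      intervalIntegral.integral_congr fun x hx => hgI x (by rwa [Set.uIcc_of_le zero_le_one] at hx)
    rw [this, intervalIntegral.integral_sub hΦi (by simp)]
    simp [hκ]
  have hweak := hu.2.2 v hv0 hv1
  have p1 := hau.mul v.hasPrim
  have e1 := p1.2 1 (by simp)
  have p2 := hΦ.mul v.hasPrim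
  have e2 := p2.2 1 (by simp)
  simp only [hv0, hv1, mul_zero, zero_add] at e1 e2
  have hBi : IntervalIntegrable (fun t => P.a t * u.dval t * v.dval t
      + P.b t * u.dval t * v.val t + P.c t * u.val t * v.val t) volume 0 1 :=
    (intervalIntegrable_iff_integrableOn_Ioc_of_le zero_le_one).2 (P.integrable_B u v)
  have hfi : IntervalIntegrable (fun t => f t * v.val t) volume 0 1 :=
    (intervalIntegrable_iff_integrableOn_Ioc_of_le zero_le_one).2
      ((memLp_two_of_intervalIntegrable hf.1 hf.2).integrable_mul v.memLp_val)
  have e3 : ∫ t in (0:ℝ)..1, φ t * v.val t = 0 := by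
    have : ∀ t, φ t * v.val t = ((P.a' t * u.dval t + P.a t * u'' t) * v.val t
        + P.a t * u.dval t * v.dval t) + f t * v.val t - (P.a t * u.dval t * v.dval t
        + P.b t * u.dval t * v.val t + P.c t * u.val t * v.val t) := fun t => by
      simp only [hφdef, Coeffs.res]; ring
    simp_rw [this]
    rw [intervalIntegral.integral_sub (p1.1.add hfi) hBi, intervalIntegral.integral_add p1.1 hfi,
      ← e1]
    change 0 + ip f v - P.B u v = 0
    rw [hweak]; ring
  have hcv : IntervalIntegrable (fun t => φ t * v.val t) volume 0 1 :=
    hφ.mul_continuousOn (by rw [Set.uIcc_of_le zero_le_one]; exact v.hasPrim.continuousOn)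
  have hΦv : IntervalIntegrable (fun t => Φ t * v.dval t) volume 0 1 :=
    v.dval_int.continuousOn_mul (by rw [Set.uIcc_of_le zero_le_one]; exact hΦ.continuousOn)
  rw [intervalIntegral.integral_add hcv hΦv, e3, zero_add] at e2
  have e4 : ∫ t in (0:ℝ)..1, v.dval t = 0 := hv1
  have e5 : ∫ t in (0:ℝ)..1, (g t)^2 = 0 := by
    have : ∫ t in (0:ℝ)..1, (g t)^2 = ∫ t in (0:ℝ)..1, (Φ t * v.dval t - κ * v.dval t) := by
      refine intervalIntegral.integral_congr fun x hx => ?_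
      rw [Set.uIcc_of_le zero_le_one] at hx
      change g x ^ 2 = Φ x * g x - κ * g x
      rw [hgI x hx]; ring
    rw [this, intervalIntegral.integral_sub hΦv (v.dval_int.const_mul _),
      intervalIntegral.integral_const_mul, e4, ← e2]
    simp
  have e6 : ∀ x ∈ Set.Icc (0:ℝ) 1, g x = 0 := by
    rw [intervalIntegral.integral_of_le zero_le_one, ← integral_Icc_eq_integral_Ioc] at e5
    have h7 := (setIntegral_eq_zero_iff_of_nonneg_ae
      (Filter.Eventually.of_forall fun x => sq_nonneg (g x))
      ((hgc.pow 2).continuousOn.integrableOn_Icc)).1 e5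
    have h8 : g =ᵐ[volume.restrict (Set.Icc (0:ℝ) 1)] fun _ => 0 := by
      filter_upwards [h7] with x hx
      simpa using hx
    exact Measure.eqOn_Icc_of_ae_eq volume zero_ne_one h8 hgc.continuousOn continuousOn_const
  refine ae_eq_zero_of_integral_eq_zero hφ fun x hx => ?_
  have h1 := e6 x hx
  have h2 := e6 0 (by simp)
  rw [hgI x hx] at h1
  rw [hgI 0 (by simp)] at h2
  have h3 : Φ 0 = 0 := by simp [hΦdef]
  change Φ x = 0
  linarith

lemma Mesh.x_le {N : ℕ} (m : Mesh N) {i j : ℕ} (hij : i ≤ j) (hj : j ≤ N) : m.x i ≤ m.x j := by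
  induction j, hij using Nat.le_induction with
  | base => exact le_rfl
  | succ k hk ih => exact (ih (by omega)).trans (m.x_mono k (by omega)).le

lemma Mesh.x_mem {N : ℕ} (m : Mesh N) {i : ℕ} (hi : i ≤ N) : m.x i ∈ Set.Icc (0:ℝ) 1 :=
  ⟨m.x_zero ▸ m.x_le (Nat.zero_le i) hi, m.x_last ▸ m.x_le hi le_rfl⟩

lemma Mesh.h_pos {N : ℕ} (m : Mesh N) {i : ℕ} (hi : i < N) : 0 < m.h i :=
  sub_pos.2 (m.x_mono i hi)

lemma Mesh.sum_h {N : ℕ} (m : Mesh N) : ∑ i ∈ Finset.range N, m.h i = 1 := by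
  simp only [Mesh.h]
  rw [Finset.sum_range_sub, m.x_zero, m.x_last, sub_zero]

lemma Mesh.sum_integral {N : ℕ} (m : Mesh N) {g : ℝ → ℝ} (hg : IntervalIntegrable g volume 0 1) :
    ∑ i ∈ Finset.range N, ∫ t in (m.x i)..(m.x (i+1)), g t = ∫ t in (0:ℝ)..1, g t := by
  rw [intervalIntegral.sum_integral_adjacent_intervals fun k hk =>
    intervalIntegrable_subinterval hg (m.x_mem hk.le) (m.x_mem hk), m.x_zero, m.x_last]

lemma HasPrim.abs_sub_le {F F' : ℝ → ℝ} (h : HasPrim F F') {x y s t : ℝ}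
    (hx : x ∈ Set.Icc (0:ℝ) 1) (hy : y ∈ Set.Icc (0:ℝ) 1)
    (hs : s ∈ Set.Icc x y) (ht : t ∈ Set.Icc x y) : |F s - F t| ≤ ∫ z in x..y, |F' z| := by
  wlog hts : t ≤ s generalizing s t
  · rw [abs_sub_comm]; exact this ht hs (le_of_not_ge hts)
  have hxy : x ≤ y := hs.1.trans hs.2
  rw [h.sub_eq ⟨hx.1.trans ht.1, ht.2.trans hy.2⟩ ⟨hx.1.trans hs.1, hs.2.trans hy.2⟩]
  refine (intervalIntegral.abs_integral_le_integral_abs hts).trans ?_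
  exact intervalIntegral.integral_mono_interval ht.1 hts hs.2
    (Filter.Eventually.of_forall fun _ => abs_nonneg _) (intervalIntegrable_subinterval h.1 hx hy).abs

lemma memLp_subinterval {g : ℝ → ℝ} (hg : MemLp g 2 unitMeas) {x y : ℝ}
    (hx : x ∈ Set.Icc (0:ℝ) 1) (hy : y ∈ Set.Icc (0:ℝ) 1) :
    MemLp g 2 (volume.restrict (Set.Ioc x y)) :=
  hg.mono_measure (Measure.restrict_mono_set _ (Set.Ioc_subset_Ioc hx.1 hy.2))

lemma integral_abs_sq_le {g : ℝ → ℝ} (hg : MemLp g 2 unitMeas) {x y : ℝ}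
    (hx : x ∈ Set.Icc (0:ℝ) 1) (hy : y ∈ Set.Icc (0:ℝ) 1) (hxy : x ≤ y) :
    (∫ z in x..y, |g z|)^2 ≤ (y - x) * ∫ z in x..y, (g z)^2 := by
  rw [intervalIntegral.integral_of_le hxy, intervalIntegral.integral_of_le hxy]
  have h := integral_mul_sq_le (memLp_subinterval hg hx hy) (memLp_const (1:ℝ))
  simp only [abs_one, mul_one, one_pow, integral_const, smul_eq_mul, measureReal_restrict_apply,
    MeasurableSet.univ, Set.univ_inter, Real.volume_real_Ioc_of_le hxy] at h
  calc (∫ z in Set.Ioc x y, |g z|)^2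
      ≤ (√(∫ z in Set.Ioc x y, (g z)^2) * √(y - x))^2 :=
        pow_le_pow_left₀ (integral_nonneg fun _ => abs_nonneg _) h 2
    _ = _ := by
        rw [mul_pow, Real.sq_sqrt (integral_nonneg fun _ => sq_nonneg _),
          Real.sq_sqrt (sub_nonneg.2 hxy), mul_comm]

/-- Poincaré–Wirtinger inequality on a subinterval. -/
lemma HasPrim.integral_sub_mean_sq_le {F F' : ℝ → ℝ} (h : HasPrim F F')
    (h2 : MemLp F' 2 unitMeas) {x y : ℝ} (hx : x ∈ Set.Icc (0:ℝ) 1) (hy : y ∈ Set.Icc (0:ℝ) 1)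
    (hxy : x < y) {s : ℝ} (hs : s * (y - x) = ∫ z in x..y, F z) :
    ∫ z in x..y, (F z - s)^2 ≤ (y - x)^2 * ∫ z in x..y, (F' z)^2 := by
  have hd : 0 < y - x := sub_pos.2 hxy
  have hFc : ContinuousOn F (Set.uIcc x y) := by
    rw [Set.uIcc_of_le hxy.le]; exact h.continuousOn.mono (Set.Icc_subset_Icc hx.1 hy.2)
  set D := ∫ z in x..y, |F' z| with hD
  have hpt : ∀ t ∈ Set.Icc x y, |F t - s| ≤ D := by
    intro t ht
    have h1 : ∫ z in x..y, F z ≤ ∫ _ in x..y, (F t + D) :=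
      intervalIntegral.integral_mono_on hxy.le hFc.intervalIntegrable (by simp) fun z hz => by
        have := (abs_le.1 (h.abs_sub_le hx hy hz ht)).2
        linarith
    have h3 : ∫ _ in x..y, (F t - D) ≤ ∫ z in x..y, F z :=
      intervalIntegral.integral_mono_on hxy.le (by simp) hFc.intervalIntegrable fun z hz => by
        have := (abs_le.1 (h.abs_sub_le hx hy hz ht)).1
        linarith
    rw [← hs, intervalIntegral.integral_const, smul_eq_mul, mul_comm s] at h1 h3
    have h4 := le_of_mul_le_mul_left h1 hd
    have h5 := le_of_mul_le_mul_left h3 hd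
    rw [abs_le]; constructor <;> linarith
  calc ∫ z in x..y, (F z - s)^2 ≤ ∫ _ in x..y, D^2 :=
        intervalIntegral.integral_mono_on hxy.le
          ((hFc.sub continuousOn_const).pow 2).intervalIntegrable (by simp) fun z hz => by
            have := hpt z hz
            rw [← sq_abs]
            exact pow_le_pow_left₀ (abs_nonneg _) this 2
    _ = (y - x) * D^2 := by simp
    _ ≤ (y - x) * ((y - x) * ∫ z in x..y, (F' z)^2) :=
        mul_le_mul_of_nonneg_left (integral_abs_sq_le h2 hx hy hxy.le) hd.le
    _ = _ := by ring

/-- The piecewise linear interpolant of an `H²` function and its first order error estimate. -/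
lemma Mesh.exists_interpolant {N : ℕ} (m : Mesh N) {H : ℝ} (hH : 0 ≤ H) (hm : ∀ i < N, m.h i ≤ H)
    (u : H1) (hu0 : u.val 0 = 0) (hu1 : u.val 1 = 0) {u'' : ℝ → ℝ} (hp : HasPrim u.dval u'')
    (h2 : MemLp u'' 2 unitMeas) :
    ∃ w : H1, w.val 0 = 0 ∧ w.val 1 = 0 ∧ m.IsPL w ∧ L2 (u.sub w).dval ≤ H * L2 u'' := by
  set s : ℕ → ℝ := fun i => (u.val (m.x (i+1)) - u.val (m.x i)) / m.h i with hs
  set g : ℝ → ℝ := fun t => ∑ i ∈ Finset.range N,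
    (Set.Ioc (m.x i) (m.x (i+1))).indicator (fun _ => s i) t with hg
  have hgs : ∀ i < N, ∀ t ∈ Set.Ioc (m.x i) (m.x (i+1)), g t = s i := by
    intro i hi t ht
    simp only [hg]
    rw [Finset.sum_eq_single i, Set.indicator_of_mem ht]
    · intro j hj hji
      rw [Finset.mem_range] at hj
      refine Set.indicator_of_notMem (fun hjt => ?_) _
      rcases lt_or_gt_of_ne hji with hlt | hlt
      · exact absurd (hjt.2.trans (m.x_le hlt hi.le)) (not_le.2 ht.1)
      · exact absurd (ht.2.trans (m.x_le hlt hj.le)) (not_le.2 hjt.1)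
    · intro hn; exact absurd (Finset.mem_range.2 hi) hn
  have hgm : Measurable g :=
    Finset.measurable_fun_sum _ fun i _ => measurable_const.indicator measurableSet_Ioc
  have hgL : MemLp g 2 unitMeas :=
    memLp_finsetSum _ fun i _ => (memLp_const (s i)).indicator measurableSet_Ioc
  refine ⟨H1.primitive g hgm hgL, by simp [H1.primitive], ?_, fun i hi => ⟨s i, fun t ht =>
    hgs i hi t (Set.Ioo_subset_Ioc_self ht)⟩, ?_⟩
  · change ∫ t in (0:ℝ)..1, g t = 0
    rw [← m.sum_integral (intervalIntegrable_of_memLp hgL)]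
    have : ∀ i ∈ Finset.range N, ∫ t in (m.x i)..(m.x (i+1)), g t
        = u.val (m.x (i+1)) - u.val (m.x i) := by
      intro i hi
      rw [Finset.mem_range] at hi
      have hle := (m.x_mono i hi).le
      rw [intervalIntegral.integral_of_le hle, setIntegral_congr_fun measurableSet_Ioc (hgs i hi),
        ← intervalIntegral.integral_of_le hle, intervalIntegral.integral_const, smul_eq_mul]
      exact mul_div_cancel₀ _ (m.h_pos hi).ne'
    rw [Finset.sum_congr rfl this, Finset.sum_range_sub (fun i => u.val (m.x i)), m.x_zero,
      m.x_last, hu0, hu1, sub_zero]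
  · have hdl : MemLp (fun t => u.dval t - g t) 2 unitMeas := u.memLp_dval.sub hgL
    have key : ∫ t in (0:ℝ)..1, (u.dval t - g t)^2 ≤ H^2 * ∫ t in (0:ℝ)..1, (u'' t)^2 := by
      rw [← m.sum_integral ((intervalIntegrable_iff_integrableOn_Ioc_of_le zero_le_one).2
        hdl.integrable_sq), ← m.sum_integral ((intervalIntegrable_iff_integrableOn_Ioc_of_le
        zero_le_one).2 h2.integrable_sq), Finset.mul_sum]
      refine Finset.sum_le_sum fun i hi => ?_
      rw [Finset.mem_range] at hi
      have hlt := m.x_mono i hi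
      have hmi := m.x_mem hi.le
      have hmi1 := m.x_mem (i := i + 1) hi
      have e1 : ∫ t in (m.x i)..(m.x (i+1)), (u.dval t - g t)^2
          = ∫ t in (m.x i)..(m.x (i+1)), (u.dval t - s i)^2 := by
        rw [intervalIntegral.integral_of_le hlt.le, intervalIntegral.integral_of_le hlt.le]
        exact setIntegral_congr_fun measurableSet_Ioc fun t ht => by
          simp only [hgs i hi t ht]
      rw [e1]
      refine (hp.integral_sub_mean_sq_le h2 hmi hmi1 hlt (s := s i) ?_).trans ?_
      · rw [← u.hasPrim.sub_eq hmi hmi1]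
        exact div_mul_cancel₀ _ (m.h_pos hi).ne'
      · refine mul_le_mul_of_nonneg_right (pow_le_pow_left₀ (m.h_pos hi).le (hm i hi) 2) ?_
        exact intervalIntegral.integral_nonneg hlt.le fun _ _ => sq_nonneg _
    change L2 (fun t => u.dval t - g t) ≤ H * L2 u''
    rw [L2, L2, ← Real.sqrt_sq hH, ← Real.sqrt_mul (sq_nonneg H)]
    exact Real.sqrt_le_sqrt key

/-- First order error estimate for the finite element solution. -/
lemma Coeffs.L2_error_le {P : Coeffs} {K : ℝ} (hK : 0 < K) (hB : P.BoundedBy K) {f : ℝ → ℝ}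
    (hf : MemL2 f) {u : H1} (hu : P.IsWeakSolution f u) (h2 : u.IsH2) {N : ℕ} (m : Mesh N) {H : ℝ}
    (hH : 0 ≤ H) (hm : ∀ i < N, m.h i ≤ H) {uh : H1} (huh : P.IsFESolution f m uh) :
    L2 (uh.sub u).dval ≤ 3 * K / P.a0 ^ 2 * H * L2 (P.res f u) := by
  obtain ⟨u'', hmeas, hint, hsq, hftc⟩ := h2
  have ha0 := P.a0_pos
  have hp : HasPrim u.dval u'' := ⟨hint, hftc⟩
  have hL := memLp_two_of_intervalIntegrable hmeas hsq
  obtain ⟨w, hw0, hw1, hPL, hw⟩ := m.exists_interpolant hH hm u hu.1 hu.2.1 hp hL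
  have hur : P.a0 * L2 u'' ≤ L2 (P.res f u) := by
    rw [← L2_const_mul _ ha0.le]
    refine L2_le_of_abs_le (P.memLp_res hf u) (hL.const_mul _) ?_
    filter_upwards [hu.res_eq hf hp, ae_restrict_mem measurableSet_Ioc] with x hx hxI
    have ha := P.a_lb x (Set.Ioc_subset_Icc_self hxI)
    rw [eq_neg_of_add_eq_zero_left hx, abs_neg, abs_mul, abs_mul, abs_of_pos ha0]
    exact mul_le_mul_of_nonneg_right (ha.trans (le_abs_self _)) (abs_nonneg _)
  set e := uh.sub u with he
  have he0 : e.val 0 = 0 := by simp [he, H1.sub, hu.1, huh.1]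
  have he1 : e.val 1 = 0 := by simp [he, H1.sub, hu.2.1, huh.2.1]
  have orth : ∀ v : H1, v.val 0 = 0 → v.val 1 = 0 → m.IsPL v → P.B e v = 0 := by
    intro v h0 h1 hv
    rw [he, P.B_sub_left, huh.2.2.2 v h0 h1 hv, hu.2.2 v h0 h1, sub_self]
  have hz : P.B e e = - P.B e (u.sub w) := by
    have h1 := orth uh huh.1 huh.2.1 huh.2.2.1
    have h3 := orth w hw0 hw1 hPL
    have h5 : P.B e e = P.B e uh - P.B e u := P.B_sub_right e uh u
    rw [h5, P.B_sub_right, h1, h3]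
    ring
  have hco := P.coercive e he0 he1
  have hbd := Coeffs.abs_B_le hK hB e (u.sub w) he0 (by simp [H1.sub, hu.1, hw0])
  have hE := L2_nonneg e.dval
  have h1 : P.a0 * L2 e.dval ≤ 3 * K * (H * L2 u'') := by
    rcases hE.eq_or_lt with h0 | hpos
    · rw [← h0, mul_zero]
      have := L2_nonneg u''
      positivity
    · refine le_of_mul_le_mul_right ?_ hpos
      calc P.a0 * L2 e.dval * L2 e.dval = P.a0 * L2 e.dval ^ 2 := by ring
        _ ≤ |P.B e (u.sub w)| := by
            rw [hz] at hco; exact hco.trans (neg_le_abs _)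
        _ ≤ 3 * K * L2 e.dval * L2 (u.sub w).dval := hbd
        _ ≤ 3 * K * L2 e.dval * (H * L2 u'') := by gcongr
        _ = _ := by ring
  have h3 : P.a0 ^ 2 * L2 e.dval ≤ 3 * K * H * L2 (P.res f u) := by
    calc P.a0 ^ 2 * L2 e.dval = P.a0 * (P.a0 * L2 e.dval) := by ring
      _ ≤ P.a0 * (3 * K * (H * L2 u'')) := by gcongr
      _ = 3 * K * H * (P.a0 * L2 u'') := by ring
      _ ≤ _ := by gcongr
  rw [div_mul_eq_mul_div, div_mul_eq_mul_div, le_div_iff₀ (by positivity)]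
  linarith

lemma integrable_rpow_two_thirds {α : Type*} [MeasurableSpace α] {ν : Measure α}
    [IsFiniteMeasure ν] {g : α → ℝ} (hg : MemLp g 2 ν) :
    Integrable (fun x => |g x| ^ ((2:ℝ)/3)) ν := by
  refine ((integrable_const (1:ℝ)).add hg.integrable_sq).mono'
    (hg.1.norm.aemeasurable.pow_const _).aestronglyMeasurable
    (Filter.Eventually.of_forall fun x => ?_)
  have h0 := abs_nonneg (g x)
  rw [Real.norm_of_nonneg (Real.rpow_nonneg h0 _)]
  change |g x| ^ ((2:ℝ)/3) ≤ 1 + g x ^ 2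
  rcases le_total (|g x|) 1 with h | h
  · have := Real.rpow_le_one h0 h (by norm_num : (0:ℝ) ≤ 2/3)
    have := sq_nonneg (g x)
    linarith
  · have := Real.rpow_le_rpow_of_exponent_le h (by norm_num : (2:ℝ)/3 ≤ 2)
    rw [Real.rpow_two, sq_abs] at this
    linarith

lemma sqrt_rpow_two_thirds {x : ℝ} (hx : 0 ≤ x) : (√x) ^ ((2:ℝ)/3) = x ^ ((1:ℝ)/3) := by
  rw [Real.sqrt_eq_rpow, ← Real.rpow_mul hx]; norm_num

/-- The mean of `|g|^{2/3}` is at most the `2/3` power of the root mean square of `g`. -/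
lemma integral_rpow_two_thirds_le {g : ℝ → ℝ} {x y : ℝ} (hxy : x < y)
    (hg : MemLp g 2 (volume.restrict (Set.Ioc x y))) :
    ∫ t in x..y, |g t| ^ ((2:ℝ)/3)
      ≤ (y - x) * (√((1 / (y - x)) * ∫ t in x..y, (g t)^2)) ^ ((2:ℝ)/3) := by
  have hd : 0 < y - x := sub_pos.2 hxy
  have hI : 0 ≤ ∫ t in x..y, (g t)^2 :=
    intervalIntegral.integral_nonneg hxy.le fun _ _ => sq_nonneg _
  rw [sqrt_rpow_two_thirds (by positivity)]
  have hpow : ∀ t, ((g t)^2) ^ ((1:ℝ)/3) = |g t| ^ ((2:ℝ)/3) := fun t => by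
    rw [← sq_abs, ← Real.rpow_natCast, ← Real.rpow_mul (abs_nonneg _)]; norm_num
  have h := (Real.concaveOn_rpow (p := 1/3) (by norm_num) (by norm_num)).le_map_set_average
    (μ := volume) (t := Set.Ioc x y) (f := fun t => (g t)^2)
    (Real.continuous_rpow_const (by norm_num)).continuousOn isClosed_Ici
    (by simp [hxy]) (by simp) (Filter.Eventually.of_forall fun t => sq_nonneg (g t))
    hg.integrable_sq
    (by simp only [Function.comp_def, hpow]; exact integrable_rpow_two_thirds hg)
  simp only [setAverage_eq, hpow, Real.volume_real_Ioc_of_le hxy.le, smul_eq_mul] at h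
  rw [intervalIntegral.integral_of_le hxy.le, intervalIntegral.integral_of_le hxy.le, one_div]
  rwa [inv_mul_le_iff₀ hd] at h

lemma integral_rpow_two_thirds_le_L2 {g : ℝ → ℝ} (hg : MemLp g 2 unitMeas) :
    ∫ t in (0:ℝ)..1, |g t| ^ ((2:ℝ)/3) ≤ L2 g ^ ((2:ℝ)/3) := by
  simpa [L2] using integral_rpow_two_thirds_le zero_lt_one hg

lemma intervalIntegrable_rpow_two_thirds {g : ℝ → ℝ} (hg : MemLp g 2 unitMeas) :
    IntervalIntegrable (fun x => |g x| ^ ((2:ℝ)/3)) volume 0 1 :=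
  (intervalIntegrable_iff_integrableOn_Ioc_of_le zero_le_one).2 (integrable_rpow_two_thirds hg)

lemma Lp23_rpow (g : ℝ → ℝ) :
    Lp23 g ^ ((2:ℝ)/3) = ∫ t in (0:ℝ)..1, |g t| ^ ((2:ℝ)/3) := by
  rw [Lp23, ← Real.rpow_mul]
  · norm_num
  · exact intervalIntegral.integral_nonneg zero_le_one fun _ _ => Real.rpow_nonneg (abs_nonneg _) _

/-- Subadditivity of `∫ |·|^{2/3}`. -/
lemma integral_rpow_two_thirds_sub_le {f g : ℝ → ℝ} (hf : MemLp f 2 unitMeas)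
    (hg : MemLp g 2 unitMeas) :
    ∫ t in (0:ℝ)..1, |f t| ^ ((2:ℝ)/3) ≤ (∫ t in (0:ℝ)..1, |g t| ^ ((2:ℝ)/3))
      + ∫ t in (0:ℝ)..1, |g t - f t| ^ ((2:ℝ)/3) := by
  have i1 := intervalIntegrable_rpow_two_thirds hg
  have i2 := intervalIntegrable_rpow_two_thirds (hg.sub hf)
  simp only [Pi.sub_apply] at i2
  rw [← intervalIntegral.integral_add i1 i2]
  refine intervalIntegral.integral_mono_on zero_le_one (intervalIntegrable_rpow_two_thirds hf)
    (i1.add i2) fun t _ => ?_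
  refine (Real.rpow_le_rpow (abs_nonneg _) ?_ (by norm_num)).trans
    (Real.rpow_add_le_add_rpow (abs_nonneg _) (abs_nonneg _) (by norm_num) (by norm_num))
  have := abs_sub (g t) (g t - f t)
  rwa [sub_sub_cancel] at this

section MeshEstimates
variable {N : ℕ}

lemma Mesh.avg_nonneg (m : Mesh N) (g : ℝ → ℝ) (i : ℕ) : 0 ≤ m.avg g i := Real.sqrt_nonneg _

lemma Mesh.alpha_rpow (m : Mesh N) (g : ℝ → ℝ) : (m.alpha g) ^ ((1:ℝ)/3)
    = ∑ i ∈ Finset.range N, m.h i * (m.avg g i) ^ ((2:ℝ)/3) := by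
  have h : 0 ≤ ∑ i ∈ Finset.range N, m.h i * (m.avg g i) ^ ((2:ℝ)/3) :=
    Finset.sum_nonneg fun i hi => mul_nonneg (m.h_pos (Finset.mem_range.1 hi)).le
      (Real.rpow_nonneg (m.avg_nonneg g i) _)
  rw [Mesh.alpha, ← Real.rpow_natCast, ← Real.rpow_mul h]
  norm_num

lemma Mesh.integral_rpow_le_alpha (m : Mesh N) {g : ℝ → ℝ} (hg : MemLp g 2 unitMeas) :
    ∫ t in (0:ℝ)..1, |g t| ^ ((2:ℝ)/3) ≤ (m.alpha g) ^ ((1:ℝ)/3) := by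
  rw [m.alpha_rpow, ← m.sum_integral (intervalIntegrable_rpow_two_thirds hg)]
  refine Finset.sum_le_sum fun i hi => ?_
  rw [Finset.mem_range] at hi
  exact integral_rpow_two_thirds_le (m.x_mono i hi)
    (memLp_subinterval hg (m.x_mem hi.le) (m.x_mem hi))

lemma Mesh.avg_sq (m : Mesh N) (g : ℝ → ℝ) {i : ℕ} (hi : i < N) :
    m.h i * (m.avg g i)^2 = ∫ t in (m.x i)..(m.x (i+1)), (g t)^2 := by
  have hh := m.h_pos hi
  have hI : 0 ≤ ∫ t in (m.x i)..(m.x (i+1)), (g t)^2 :=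
    intervalIntegral.integral_nonneg (m.x_mono i hi).le fun _ _ => sq_nonneg _
  rw [Mesh.avg, Real.sq_sqrt (by positivity)]
  field_simp

lemma Mesh.avg_add_le (m : Mesh N) {f g : ℝ → ℝ} (hf : MemLp f 2 unitMeas)
    (hg : MemLp g 2 unitMeas) {i : ℕ} (hi : i < N) :
    m.avg (fun t => f t + g t) i ≤ m.avg f i + m.avg g i := by
  have hh := m.h_pos hi
  have hle := (m.x_mono i hi).le
  have hs : 0 ≤ 1 / m.h i := by positivity
  simp only [Mesh.avg, intervalIntegral.integral_of_le hle]
  rw [Real.sqrt_mul hs, Real.sqrt_mul hs, Real.sqrt_mul hs, ← mul_add]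
  refine mul_le_mul_of_nonneg_left ?_ (Real.sqrt_nonneg _)
  exact sqrt_integral_add_sq_le (memLp_subinterval hf (m.x_mem hi.le) (m.x_mem hi))
    (memLp_subinterval hg (m.x_mem hi.le) (m.x_mem hi))

/-- Weighted power mean inequality on a mesh, for an `h`-weighted sum of `2/3` powers. -/
lemma Mesh.sum_rpow_le (m : Mesh N) {V : ℕ → ℝ} (hV : ∀ i, 0 ≤ V i) {q : ℝ} (hq : 2 / 3 ≤ q) :
    ∑ i ∈ Finset.range N, m.h i * V i ^ ((2:ℝ)/3)
      ≤ (∑ i ∈ Finset.range N, m.h i * V i ^ q) ^ (2 / 3 / q) := by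
  have hq0 : 0 < q := by linarith
  have h := Real.rpow_arith_mean_le_arith_mean_rpow (Finset.range N) m.h
    (fun i => V i ^ ((2:ℝ)/3)) (fun i hi => (m.h_pos (Finset.mem_range.1 hi)).le) m.sum_h
    (fun i _ => Real.rpow_nonneg (hV i) _) (p := q / (2/3)) (by rw [le_div_iff₀] <;> linarith)
  have hS : 0 ≤ ∑ i ∈ Finset.range N, m.h i * V i ^ ((2:ℝ)/3) :=
    Finset.sum_nonneg fun i hi => mul_nonneg (m.h_pos (Finset.mem_range.1 hi)).le
      (Real.rpow_nonneg (hV i) _)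
  have e : ∀ i, (V i ^ ((2:ℝ)/3)) ^ (q / (2/3)) = V i ^ q := fun i => by
    rw [← Real.rpow_mul (hV i)]; congr 1; field_simp
  simp only [e] at h
  have h2 := Real.rpow_le_rpow (Real.rpow_nonneg hS _) h (z := 2 / 3 / q) (by positivity)
  rwa [← Real.rpow_mul hS, show q / (2/3) * (2 / 3 / q) = 1 by field_simp, Real.rpow_one] at h2

lemma Mesh.alpha_rpow_le_L2 (m : Mesh N) {g : ℝ → ℝ} (hg : MemLp g 2 unitMeas) :
    (m.alpha g) ^ ((1:ℝ)/3) ≤ L2 g ^ ((2:ℝ)/3) := by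
  rw [m.alpha_rpow]
  refine (m.sum_rpow_le (m.avg_nonneg g) (q := 2) (by norm_num)).trans_eq ?_
  have : ∑ i ∈ Finset.range N, m.h i * m.avg g i ^ (2:ℝ) = ∫ t in (0:ℝ)..1, (g t)^2 := by
    rw [← m.sum_integral ((intervalIntegrable_iff_integrableOn_Ioc_of_le zero_le_one).2
      hg.integrable_sq)]
    refine Finset.sum_congr rfl fun i hi => ?_
    rw [Real.rpow_two, m.avg_sq g (Finset.mem_range.1 hi)]
  rw [this, L2, sqrt_rpow_two_thirds
    (intervalIntegral.integral_nonneg zero_le_one fun _ _ => sq_nonneg _)]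
  norm_num

/-- Subadditivity of `g ↦ α_h(g)^{1/3}`. -/
lemma Mesh.alpha_rpow_add_le (m : Mesh N) {f g : ℝ → ℝ} (hf : MemLp f 2 unitMeas)
    (hg : MemLp g 2 unitMeas) : (m.alpha (fun t => f t + g t)) ^ ((1:ℝ)/3)
      ≤ (m.alpha f) ^ ((1:ℝ)/3) + (m.alpha g) ^ ((1:ℝ)/3) := by
  simp only [m.alpha_rpow]
  rw [← Finset.sum_add_distrib]
  refine Finset.sum_le_sum fun i hi => ?_
  rw [Finset.mem_range] at hi
  rw [← mul_add]
  refine mul_le_mul_of_nonneg_left ?_ (m.h_pos hi).le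
  exact (Real.rpow_le_rpow (m.avg_nonneg _ i) (m.avg_add_le hf hg hi) (by norm_num)).trans
    (Real.rpow_add_le_add_rpow (m.avg_nonneg _ i) (m.avg_nonneg _ i) (by norm_num) (by norm_num))

/-- For an absolutely continuous `r`, `α_h(r)^{1/3}` exceeds `∫ |r|^{2/3}` by at most the
contribution of the oscillation of `r` on the elements. -/
lemma Mesh.alpha_rpow_le_of_hasPrim (m : Mesh N) {r r' : ℝ → ℝ} (h : HasPrim r r') {H : ℝ}
    (hm : ∀ i < N, m.h i ≤ H) : (m.alpha r) ^ ((1:ℝ)/3)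
      ≤ (∫ t in (0:ℝ)..1, |r t| ^ ((2:ℝ)/3)) + (H * L1 r') ^ ((2:ℝ)/3) := by
  have hr := memLp_two_of_continuousOn h.continuousOn
  have hri := intervalIntegrable_rpow_two_thirds hr
  set V : ℕ → ℝ := fun i => |(∫ t in (m.x i)..(m.x (i+1)), |r' t|)| with hVdef
  have hV : ∀ i, 0 ≤ V i := fun i => abs_nonneg _
  have hVi : ∀ i < N, V i = ∫ t in (m.x i)..(m.x (i+1)), |r' t| := fun i hi =>
    abs_of_nonneg (intervalIntegral.integral_nonneg (m.x_mono i hi).le fun _ _ => abs_nonneg _)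
  have hsum : ∑ i ∈ Finset.range N, m.h i * V i ^ ((2:ℝ)/3) ≤ (H * L1 r') ^ ((2:ℝ)/3) := by
    refine (m.sum_rpow_le hV (q := 1) (by norm_num)).trans ?_
    simp only [Real.rpow_one, div_one]
    refine Real.rpow_le_rpow (Finset.sum_nonneg fun i hi =>
      mul_nonneg (m.h_pos (Finset.mem_range.1 hi)).le (hV i)) ?_ (by norm_num)
    rw [L1, ← m.sum_integral h.1.abs, Finset.mul_sum]
    refine Finset.sum_le_sum fun i hi => ?_
    rw [Finset.mem_range] at hi
    rw [← hVi i hi]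
    exact mul_le_mul_of_nonneg_right (hm i hi) (hV i)
  refine le_trans ?_ (add_le_add_right hsum _)
  rw [m.alpha_rpow, ← m.sum_integral hri, ← Finset.sum_add_distrib]
  refine Finset.sum_le_sum fun i hi => ?_
  rw [Finset.mem_range] at hi
  have hlt := m.x_mono i hi
  have hmi := m.x_mem hi.le
  have hmi1 := m.x_mem (i := i + 1) hi
  have hh := m.h_pos hi
  have hint := intervalIntegrable_subinterval hri hmi hmi1
  have hpt : ∀ t ∈ Set.Icc (m.x i) (m.x (i+1)), m.avg r i ≤ |r t| + V i := by
    intro t ht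
    refine Real.sqrt_le_iff.2 ⟨add_nonneg (abs_nonneg _) (hV i), ?_⟩
    rw [one_div, inv_mul_le_iff₀ hh]
    calc ∫ z in (m.x i)..(m.x (i+1)), (r z)^2
        ≤ ∫ _ in (m.x i)..(m.x (i+1)), (|r t| + V i)^2 := by
          refine intervalIntegral.integral_mono_on hlt.le ?_ (by simp) fun z hz => ?_
          · exact intervalIntegrable_subinterval
              ((intervalIntegrable_iff_integrableOn_Ioc_of_le zero_le_one).2 hr.integrable_sq)
              hmi hmi1
          · have h1 := h.abs_sub_le hmi hmi1 hz ht
            rw [← hVi i hi] at h1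
            have h2 := abs_sub_abs_le_abs_sub (r z) (r t)
            rw [← sq_abs (r z)]
            exact pow_le_pow_left₀ (abs_nonneg _) (by linarith) 2
      _ = m.h i * (|r t| + V i)^2 := by simp [Mesh.h]
  calc m.h i * m.avg r i ^ ((2:ℝ)/3)
      = ∫ _ in (m.x i)..(m.x (i+1)), m.avg r i ^ ((2:ℝ)/3) := by simp [Mesh.h]
    _ ≤ ∫ t in (m.x i)..(m.x (i+1)), (|r t| ^ ((2:ℝ)/3) + V i ^ ((2:ℝ)/3)) := by
        refine intervalIntegral.integral_mono_on hlt.le (by simp) (hint.add (by simp))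
          fun t ht => ?_
        exact (Real.rpow_le_rpow (m.avg_nonneg _ i) (hpt t ht) (by norm_num)).trans
          (Real.rpow_add_le_add_rpow (abs_nonneg _) (hV i) (by norm_num) (by norm_num))
    _ = _ := by
        rw [intervalIntegral.integral_add hint (by simp)]
        simp [Mesh.h]

end MeshEstimates

/-- a priori bounds on α_h for meshes with max_i h_i ≤ C₁/N
(Lemma 3.10). -/
theorem statement13 (P : Coeffs) (C₁ : ℝ) (hC₁ : 0 < C₁) :
    ∃ C : ℝ, 0 < C ∧
      ∀ f : ℝ → ℝ, MemL2 f →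
      ∀ u : H1, P.IsWeakSolution f u → u.IsH2 →
      ∀ r' : ℝ → ℝ, HasL1Deriv (P.res f u) r' →
      ∀ (N : ℕ) (m : Mesh N), (∀ i < N, m.h i ≤ C₁ / (N:ℝ)) →
      ∀ uh : H1, P.IsFESolution f m uh →
        (Lp23 (P.res f u)) ^ ((2:ℝ)/3) - (C * L2 (P.res f u) / (N:ℝ)) ^ ((2:ℝ)/3)
            ≤ (m.alpha (P.res f uh)) ^ ((1:ℝ)/3) ∧
        (m.alpha (P.res f uh)) ^ ((1:ℝ)/3)
            ≤ (Lp23 (P.res f u)) ^ ((2:ℝ)/3)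
              + (C * L1 r' / (N:ℝ)) ^ ((2:ℝ)/3)
              + (C * L2 (P.res f u) / (N:ℝ)) ^ ((2:ℝ)/3) := by
  obtain ⟨K, hK, hB⟩ := P.exists_bound
  have ha0 := P.a0_pos
  set D : ℝ := 3 * K * (3 * K / P.a0 ^ 2 * C₁) with hD
  have hDpos : 0 < D := by positivity
  refine ⟨D + C₁, by positivity, ?_⟩
  intro f hf u hu hu2 r' hr' N m hm uh huh
  have hH : 0 ≤ C₁ / (N:ℝ) := by positivity
  have hr : HasPrim (P.res f u) r' := hr'.2
  have mr := P.memLp_res hf u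
  have mrh := P.memLp_res hf uh
  set r := P.res f u with hrdef
  set rh := P.res f uh with hrhdef
  have md : MemLp (fun t => rh t - r t) 2 unitMeas := mrh.sub mr
  have hN : (0:ℝ) ≤ N := Nat.cast_nonneg N
  have hdiff : L2 (fun t => rh t - r t) ≤ (D + C₁) * L2 r / N := by
    have hL := L2_nonneg r
    calc L2 (fun t => rh t - r t) ≤ 3 * K * L2 (uh.sub u).dval :=
          Coeffs.L2_res_sub_le hK hB hf u uh hu.1 huh.1
      _ ≤ 3 * K * (3 * K / P.a0 ^ 2 * (C₁ / N) * L2 r) := by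
          gcongr
          exact Coeffs.L2_error_le hK hB hf hu hu2 m hH hm huh
      _ = D * L2 r / N := by rw [hD]; ring
      _ ≤ _ := by gcongr; linarith
  have hdiff' := Real.rpow_le_rpow (L2_nonneg _) hdiff (z := 2 / 3) (by norm_num)
  rw [Lp23_rpow]
  constructor
  · have h1 := integral_rpow_two_thirds_sub_le mr mrh
    have h2 := integral_rpow_two_thirds_le_L2 md
    have h3 := m.integral_rpow_le_alpha mrh
    linarith
  · have h1 := m.alpha_rpow_add_le mr md
    simp only [add_sub_cancel] at h1
    have h2 := m.alpha_rpow_le_L2 md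
    have h3 := m.alpha_rpow_le_of_hasPrim hr hm
    have hL1 : 0 ≤ L1 r' := intervalIntegral.integral_nonneg zero_le_one fun _ _ => abs_nonneg _
    have h4 : (C₁ / N * L1 r') ^ ((2:ℝ)/3) ≤ ((D + C₁) * L1 r' / N) ^ ((2:ℝ)/3) := by
      refine Real.rpow_le_rpow (mul_nonneg hH hL1) ?_ (by norm_num)
      rw [div_mul_eq_mul_div]
      gcongr
      linarith
    linarith

end EquidMesh
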